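/- Let X be a random vector in ℝ^d, d ≥ 1. Assume that for every affine hyperplane L supporting C_X with 0 < P(X ∈ L) < 1 one has pr_L(rint D(K_X)) = pr_L(rint D(K_{X|L})). Then F*(D(I_X)) ⊆ {D(I_{X|C}) : C ∈ F*_+(C_X)} ⊆ F(D(I_X)) \ {D(I_X)}; that is, every maximal proper face of D(I_X) equals D(I_{X|C}) for some C ∈ F*_+(C_X), and for every C ∈ F*_+(C_X) the set D(I_{X|C}) is a nonempty proper face of D(I_X). -/

import Mathlib

/-!
The domain `D(I_X)` is convex and its closure contains `C_X`: by Jensen's inequality the barycentre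
of `X` conditioned on any ball of positive mass lies in `D(I_X)`. Conversely, any closed half-space
containing `C_X` contains `D(I_X)`. Hence the hyperplanes supporting `D(I_X)` along a nonempty
subset of it are, essentially, hyperplanes supporting `C_X`.

The heart of the matter is `edom_rateFn_cond_hyp`: if `L = {ℓ·x = c}` supports `C_X`, does not
contain it and has positive mass, then `D(I_X) ∩ L = D(I_{X|L})`. With `ℓ·X ≤ c`, the quantity
`E[exp((u + tℓ)·X)] exp(-tc)` decreases to `E[exp(u·X); X ∈ L]` as `t → ∞`, so on `L` the rate
function is, up to a constant, the supremum of `u·v - K_{X|L}(u)` over `u ∈ D(K_X) + ℝℓ`.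
Condition (a) says that this set contains the relative interior of `D(K_{X|L})`, which is enough to
compute the supremum over all of `D(K_{X|L})` by convexity. The same limit shows that
a supporting hyperplane of `C_X` of mass zero does not meet `D(I_X)`.

A maximal proper face `C` of `C_X` is of the form `C_X ∩ L`, so that conditioning on `C` or on `L`
is the same, and `D(I_{X|C}) = D(I_X) ∩ L` is a proper face. A maximal proper face `F` of `D(I_X)` lies
in a supporting hyperplane `L`, which has positive mass; enlarging `C_X ∩ L` to a maximal proper
face `C` of `C_X` gives `F ⊆ D(I_{X|L}) ⊆ D(I_{X|C})`, with equality by maximality of `F`.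
-/

open MeasureTheory ProbabilityTheory Set Filter Topology
open scoped RealInnerProductSpace ENNReal ProbabilityTheory

noncomputable section

/-- The topological support of a measure on `ℝ^d`: the smallest closed set of full measure,
equivalently the set of points all of whose neighbourhoods have positive measure. -/
def msupp {d : ℕ} (μ : Measure (EuclideanSpace ℝ (Fin d))) : Set (EuclideanSpace ℝ (Fin d)) :=
  {x | ∀ U : Set (EuclideanSpace ℝ (Fin d)), IsOpen U → x ∈ U → 0 < μ U}

/-- The convex support `C_X` of a random vector with law `μ`. -/
def convSupp {d : ℕ} (μ : Measure (EuclideanSpace ℝ (Fin d))) : Set (EuclideanSpace ℝ (Fin d)) :=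
  convexHull ℝ (msupp μ)

/-- The logarithmic Laplace transform `K_X(u) = log E[exp(u·X)]`, with values in `(-∞, +∞]`. -/
def logLaplace {d : ℕ} (μ : Measure (EuclideanSpace ℝ (Fin d)))
    (u : EuclideanSpace ℝ (Fin d)) : EReal :=
  (∫⁻ x, ENNReal.ofReal (Real.exp ⟪u, x⟫) ∂μ).log

/-- The rate function `I_X(v) = sup_u (u·v - K_X(u))`. -/
def rateFn {d : ℕ} (μ : Measure (EuclideanSpace ℝ (Fin d)))
    (v : EuclideanSpace ℝ (Fin d)) : EReal :=
  ⨆ u : EuclideanSpace ℝ (Fin d), ((⟪u, v⟫ : ℝ) : EReal) - logLaplace μ u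

/-- The effective domain of an extended-real-valued function. -/
def edom {α : Type*} (f : α → EReal) : Set α := {x | f x < ⊤}

/-- The affine hyperplane with unit normal `ℓ` and offset `c`. -/
def hyp {d : ℕ} (ℓ : EuclideanSpace ℝ (Fin d)) (c : ℝ) : Set (EuclideanSpace ℝ (Fin d)) :=
  {v | ⟪ℓ, v⟫ = c}

/-- The hyperplane `{v : ℓ·v = c}` supports the convex set `C`: it meets `C` and `C` lies in
one of the two closed half-spaces bounded by it. -/
def SupportsSet {d : ℕ} (ℓ : EuclideanSpace ℝ (Fin d)) (c : ℝ)
    (C : Set (EuclideanSpace ℝ (Fin d))) : Prop :=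
  (hyp ℓ c ∩ C).Nonempty ∧ ((∀ x ∈ C, ⟪ℓ, x⟫ ≤ c) ∨ (∀ x ∈ C, c ≤ ⟪ℓ, x⟫))

/-- Orthogonal projection onto the hyperplane `{v : ℓ·v = c}` (for `‖ℓ‖ = 1`). -/
def projHyp {d : ℕ} (ℓ : EuclideanSpace ℝ (Fin d)) (c : ℝ)
    (v : EuclideanSpace ℝ (Fin d)) : EuclideanSpace ℝ (Fin d) :=
  v + (c - ⟪ℓ, v⟫) • ℓ

/-- A face of a convex set: a convex subset `F ⊆ C` such that any closed segment of `C` having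
a relative interior point in `F` has both endpoints in `F`. -/
def IsFaceOf {V : Type*} [AddCommGroup V] [Module ℝ V] (C F : Set V) : Prop :=
  Convex ℝ F ∧ IsExtreme ℝ C F

/-- A maximal proper face of a convex set: a nonempty proper face contained in no face
other than `C` and itself. -/
def IsMaxProperFace {V : Type*} [AddCommGroup V] [Module ℝ V] (C F : Set V) : Prop :=
  IsFaceOf C F ∧ F.Nonempty ∧ F ≠ C ∧
    ∀ F', IsFaceOf C F' → F'.Nonempty → F ⊆ F' → F' = C ∨ F' = F

/-- `F*₊(C_X)`: the maximal proper faces of the convex support carrying positive probability. -/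
def facesPlus {d : ℕ} (μ : Measure (EuclideanSpace ℝ (Fin d))) :
    Set (Set (EuclideanSpace ℝ (Fin d))) :=
  {C | IsMaxProperFace (convSupp μ) C ∧ 0 < μ C}

/-- `K_X` is steep: `|∇K_X(u_n)| → ∞` along every sequence in the interior of `D(K_X)`
converging to a boundary point of `D(K_X)`. -/
def Steep {d : ℕ} (μ : Measure (EuclideanSpace ℝ (Fin d))) : Prop :=
  ∀ (u : ℕ → EuclideanSpace ℝ (Fin d)) (u₀ : EuclideanSpace ℝ (Fin d)),
    (∀ n, u n ∈ interior (edom (logLaplace μ))) → Tendsto u atTop (𝓝 u₀) →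
    u₀ ∈ frontier (edom (logLaplace μ)) →
    Tendsto (fun n => ‖gradient (fun w => (logLaplace μ w).toReal) (u n)‖) atTop atTop

/-- Condition (a) of the projection property: for every hyperplane `L` supporting `C_X` with
`0 < P(X ∈ L) < 1`, the projections on `L` of the relative interiors of `D(K_X)` and
`D(K_{X|L})` coincide. -/
def CondA {d : ℕ} (μ : Measure (EuclideanSpace ℝ (Fin d))) : Prop :=
  ∀ (ℓ : EuclideanSpace ℝ (Fin d)) (c : ℝ), ‖ℓ‖ = 1 → SupportsSet ℓ c (convSupp μ) →
    0 < μ (hyp ℓ c) → μ (hyp ℓ c) < 1 →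
    projHyp ℓ c '' intrinsicInterior ℝ (edom (logLaplace μ)) =
      projHyp ℓ c '' intrinsicInterior ℝ (edom (logLaplace (μ[|hyp ℓ c])))

/-- Depth-`n` truncation of the (well-founded) recursive definition of the projection property. -/
def ProjPropN {d : ℕ} : ℕ → Measure (EuclideanSpace ℝ (Fin d)) → Prop
  | 0, μ => CondA μ
  | n + 1, μ => CondA μ ∧ ∀ C ∈ facesPlus μ, ProjPropN n (μ[|C])

/-- `K_X` has the projection property: condition (a) holds, and `K_{X|C}` has the projection
property for every `C ∈ F*₊(C_X)`. (The recursion on the dimension of `C_X` terminates in at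
most `d` steps, so this is equivalent to all finite-depth truncations holding.) -/
def ProjProp {d : ℕ} (μ : Measure (EuclideanSpace ℝ (Fin d))) : Prop :=
  ∀ n, ProjPropN n μ

/-- Depth-`n` truncation of the recursive definition of total steepness. -/
def TotallySteepN {d : ℕ} : ℕ → Measure (EuclideanSpace ℝ (Fin d)) → Prop
  | 0, μ => Steep μ
  | n + 1, μ => Steep μ ∧ ∀ C ∈ facesPlus μ, TotallySteepN n (μ[|C])

/-- `K_X` is totally steep: `K_X` is steep and `K_{X|C}` is totally steep for every
`C ∈ F*₊(C_X)`. -/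
def TotallySteep {d : ℕ} (μ : Measure (EuclideanSpace ℝ (Fin d))) : Prop :=
  ∀ n, TotallySteepN n μ

/-- `f` is strictly convex on `A`: `f` is affine on no nondegenerate segment contained in `A`. -/
def StrictlyConvexOnSet {d : ℕ} (f : EuclideanSpace ℝ (Fin d) → EReal)
    (A : Set (EuclideanSpace ℝ (Fin d))) : Prop :=
  ∀ x y : EuclideanSpace ℝ (Fin d), segment ℝ x y ⊆ A → x ≠ y →
    ¬ ∀ t : ℝ, t ∈ Icc (0 : ℝ) 1 →
      f ((1 - t) • x + t • y) = ((1 - t : ℝ) : EReal) * f x + ((t : ℝ) : EReal) * f y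

/-! ### Faces and supporting hyperplanes -/

section Convexity

variable {E : Type*} [NormedAddCommGroup E] [InnerProductSpace ℝ E]

/-- A segment from any `y ∈ A` through an interior point `x` of `A` can be prolonged beyond `x`
inside `A`, so an extreme subset containing `x` contains `y`. -/
theorem extreme_eq_of_mem_interior {A F : Set E} (hF : IsExtreme ℝ A F) {x : E}
    (hxF : x ∈ F) (hx : x ∈ interior A) : F = A := by
  refine hF.subset.antisymm fun y hy => ?_
  have hcont : Tendsto (fun t : ℝ => x + t • (x - y)) (𝓝 0) (𝓝 x) := by
    have : Continuous fun t : ℝ => x + t • (x - y) := by fun_prop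
    simpa using this.tendsto 0
  have hev : ∀ᶠ t in 𝓝[>] (0 : ℝ), x + t • (x - y) ∈ A :=
    (hcont.mono_left nhdsWithin_le_nhds).eventually (mem_interior_iff_mem_nhds.1 hx)
  obtain ⟨t, htA, ht⟩ := (hev.and self_mem_nhdsWithin).exists
  have ht : 0 < t := ht
  refine hF.left_mem_of_mem_openSegment hy htA hxF
    ⟨t / (1 + t), 1 / (1 + t), by positivity, by positivity, by field_simp; ring, ?_⟩
  match_scalars <;> field_simp
  ring

/-- A proper face of a convex set lies in a supporting hyperplane that does not contain the whole
set. Both sets are pulled back to the direction of the affine span, where the convex set has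
nonempty interior and Hahn-Banach separates that interior from the face. -/
theorem exists_support_of_face [FiniteDimensional ℝ E] {A F : Set E} (hA : Convex ℝ A)
    (hF : IsFaceOf A F) (hne : F.Nonempty) (hFA : F ≠ A) :
    ∃ (ℓ : E) (c : ℝ), ‖ℓ‖ = 1 ∧ (∀ x ∈ A, ⟪ℓ, x⟫ ≤ c) ∧ (∀ x ∈ F, ⟪ℓ, x⟫ = c) ∧
      ∃ a ∈ A, ⟪ℓ, a⟫ < c := by
  obtain ⟨a₀, ha₀F⟩ := hne
  have ha₀ : a₀ ∈ A := hF.2.subset ha₀F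
  set T : Set E := (fun v => a₀ + v) ⁻¹' A with hT
  set S : Submodule ℝ E := Submodule.span ℝ T with hS
  set j : S → E := fun v => a₀ + v with hj
  have hjc : ∀ (x y : S) (a b : ℝ), a + b = 1 → j (a • x + b • y) = a • j x + b • j y := by
    intro x y a b hab
    have : a₀ = (a + b) • a₀ := by rw [hab, one_smul]
    simp only [hj, Submodule.coe_add, Submodule.coe_smul, smul_add]
    nth_rewrite 1 [this]
    rw [add_smul]
    abel
  have hsurj : ∀ x ∈ A, ∃ s : S, j s = x := fun x hx =>
    ⟨⟨x - a₀, Submodule.subset_span (by simpa [hT] using hx)⟩, by simp [hj]⟩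
  set A' : Set S := j ⁻¹' A with hA'
  set F' : Set S := j ⁻¹' F with hF'
  have hA'c : Convex ℝ A' := by
    intro x hx y hy a b ha hb hab
    change j _ ∈ A
    rw [hjc _ _ _ _ hab]
    exact hA hx hy ha hb hab
  have hF'c : Convex ℝ F' := by
    intro x hx y hy a b ha hb hab
    change j _ ∈ F
    rw [hjc _ _ _ _ hab]
    exact hF.1 hx hy ha hb hab
  have hF'e : IsExtreme ℝ A' F' := by
    refine ⟨fun x hx => hF.2.subset hx, ?_⟩
    rintro x hx y hy z hz ⟨a, b, ha, hb, hab, rfl⟩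
    exact hF.2.left_mem_of_mem_openSegment hx hy hz ⟨a, b, ha, hb, hab, (hjc _ _ _ _ hab).symm⟩
  have hspan : affineSpan ℝ A' = ⊤ := by
    have h0 : (0 : S) ∈ A' := by simpa [hA', hj] using ha₀
    have h1 : Submodule.span ℝ A' = ⊤ := Submodule.span_span_coe_preimage
    rw [← insert_eq_of_mem h0]
    apply SetLike.coe_injective
    rw [affineSpan_insert_zero, h1]
    rfl
  have hint : (interior A').Nonempty := hA'c.interior_nonempty_iff_affineSpan_eq_top.2 hspan
  have hdisj : Disjoint (interior A') F' := by
    rw [Set.disjoint_left]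
    intro x hx hxF
    have h := extreme_eq_of_mem_interior hF'e hxF hx
    apply hFA
    refine hF.2.subset.antisymm fun y hy => ?_
    obtain ⟨s, rfl⟩ := hsurj y hy
    have : s ∈ A' := hy
    rw [← h] at this
    exact this
  obtain ⟨f, u, hfu, huf⟩ :=
    geometric_hahn_banach_open hA'c.interior isOpen_interior hF'c hdisj
  have hle : ∀ x ∈ A', f x ≤ u := by
    intro x hx
    have h1 : x ∈ closure (interior A') := by
      rw [hA'c.closure_interior_eq_closure_of_nonempty_interior hint]
      exact subset_closure hx
    exact closure_minimal (fun y hy => (hfu y hy).le)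
      (isClosed_le f.continuous continuous_const) h1
  set r : S := (InnerProductSpace.toDual ℝ S).symm f with hr
  have hrf : ∀ x : S, ⟪(r : E), (x : E)⟫ = f x := by
    intro x
    rw [← Submodule.coe_inner, hr, InnerProductSpace.toDual_symm_apply]
  have hjf : ∀ x : S, ⟪(r : E), j x⟫ = ⟪(r : E), a₀⟫ + f x := fun x => by
    rw [hj, ← hrf, inner_add_right]
  obtain ⟨s₀, hs₀⟩ := hint
  have h0F : (0 : S) ∈ F' := by simpa [hF', hj] using ha₀F
  have hr0 : (r : E) ≠ 0 := by
    intro h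
    have h1 := hfu s₀ hs₀
    have h2 := huf 0 h0F
    rw [← hrf, h, inner_zero_left] at h1 h2
    linarith
  have hpos : 0 < ‖(r : E)‖⁻¹ := by positivity
  refine ⟨‖(r : E)‖⁻¹ • (r : E), ‖(r : E)‖⁻¹ * (⟪(r : E), a₀⟫ + u), ?_, ?_, ?_, ?_⟩
  · exact norm_smul_inv_norm hr0
  · intro x hx
    obtain ⟨s, rfl⟩ := hsurj x hx
    rw [real_inner_smul_left, hjf]
    gcongr
    exact hle s hx
  · intro x hx
    obtain ⟨s, rfl⟩ := hsurj x (hF.2.subset hx)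
    rw [real_inner_smul_left, hjf, le_antisymm (hle s (hF.2.subset hx)) (huf s hx)]
  · refine ⟨j s₀, interior_subset (s := A') hs₀, ?_⟩
    rw [real_inner_smul_left, hjf]
    gcongr
    exact hfu s₀ hs₀

/-- A proper face of largest dimension among those containing `F` is maximal: a strictly larger
proper face of the same dimension would have the same affine span, contradicting
`exists_support_of_face`. -/
theorem exists_maxProperFace [FiniteDimensional ℝ E] {A F : Set E}
    (hF : IsFaceOf A F) (hne : F.Nonempty) (hFA : F ≠ A) :
    ∃ G, IsMaxProperFace A G ∧ F ⊆ G := by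
  classical
  let P : ℕ → Prop := fun n => ∃ G, IsFaceOf A G ∧ F ⊆ G ∧ G ≠ A ∧
    Module.finrank ℝ (vectorSpan ℝ G) = n
  have hb : ∀ n, P n → n ≤ Module.finrank ℝ E := by
    rintro n ⟨G, -, -, -, rfl⟩
    exact Submodule.finrank_le _
  have h0 : P (Module.finrank ℝ (vectorSpan ℝ F)) := ⟨F, hF, Subset.rfl, hFA, rfl⟩
  obtain ⟨G, hG, hFG, hGA, hn⟩ := Nat.findGreatest_spec (hb _ h0) h0
  refine ⟨G, ⟨hG, hne.mono hFG, hGA, fun G' hG' _ hGG' => ?_⟩, hFG⟩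
  by_contra hcon
  push Not at hcon
  obtain ⟨hG'A, hG'G⟩ := hcon
  have hle : Module.finrank ℝ (vectorSpan ℝ G') ≤ Module.finrank ℝ (vectorSpan ℝ G) := by
    have h1 : P (Module.finrank ℝ (vectorSpan ℝ G')) := ⟨G', hG', hFG.trans hGG', hG'A, rfl⟩
    rw [hn]
    exact Nat.le_findGreatest (hb _ h1) h1
  have heq : vectorSpan ℝ G = vectorSpan ℝ G' :=
    Submodule.eq_of_le_of_finrank_le (vectorSpan_mono ℝ hGG') hle
  obtain ⟨ℓ, c, -, -, hc, a, haG', ha⟩ := exists_support_of_face hG'.1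
    ⟨hG.1, hG.2.mono hG'.2.subset hGG'⟩ (hne.mono hFG) (Ne.symm hG'G)
  obtain ⟨g, hg⟩ := hne.mono hFG
  have hmem : a - g ∈ vectorSpan ℝ G := by
    rw [heq]
    exact vsub_mem_vectorSpan ℝ haG' (hGG' hg)
  -- `ℓ` is constant on `G`, hence vanishes on the direction of its affine span
  have hker : vectorSpan ℝ G ≤ LinearMap.ker (innerSL ℝ ℓ).toLinearMap := by
    rw [vectorSpan, Submodule.span_le]
    rintro _ ⟨x, hx, y, hy, rfl⟩
    simp [inner_sub_right, hc x hx, hc y hy]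
  have := hker hmem
  simp [inner_sub_right, hc g hg] at this
  linarith

theorem isFaceOf_inter_support {A : Set E} (hA : Convex ℝ A) {ℓ : E} {c : ℝ}
    (hle : ∀ x ∈ A, ⟪ℓ, x⟫ ≤ c) : IsFaceOf A (A ∩ {v | ⟪ℓ, v⟫ = c}) := by
  refine ⟨hA.inter ?_, inter_subset_left, ?_⟩
  · intro x hx y hy a b _ _ hab
    simp only [mem_ofPred_eq] at hx hy ⊢
    rw [inner_add_right, real_inner_smul_right, real_inner_smul_right, hx, hy, ← add_mul, hab,
      one_mul]
  · rintro x hx y hy z ⟨-, hz⟩ ⟨a, b, ha, hb, hab, rfl⟩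
    refine ⟨hx, le_antisymm (hle x hx) ?_⟩
    simp only [mem_ofPred_eq] at hz
    rw [inner_add_right, real_inner_smul_right, real_inner_smul_right] at hz
    have h1 : b * ⟪ℓ, y⟫ ≤ b * c := by gcongr; exact hle y hy
    have h2 : a * c ≤ a * ⟪ℓ, x⟫ := by
      have : c = a * c + b * c := by rw [← add_mul, hab, one_mul]
      linarith
    exact le_of_mul_le_mul_left h2 ha

/-- The half-open segment from a point of a convex set to a relative interior point (the former
excluded) lies in the relative interior. -/
theorem combo_mem_intrinsicInterior {s : Set E} (hs : Convex ℝ s) {x y : E}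
    (hx : x ∈ s) (hy : y ∈ intrinsicInterior ℝ s) {t : ℝ} (ht : 0 < t) (ht1 : t ≤ 1) :
    (1 - t) • x + t • y ∈ intrinsicInterior ℝ s := by
  obtain ⟨y', hy', rfl⟩ := mem_intrinsicInterior.1 hy
  rw [mem_interior_iff_mem_nhds, Metric.mem_nhds_iff] at hy'
  obtain ⟨ε, hε, hball⟩ := hy'
  have hxs : x ∈ affineSpan ℝ s := subset_affineSpan ℝ s hx
  have hcombo : ∀ (p q : E) (r : ℝ), p ∈ affineSpan ℝ s → q ∈ affineSpan ℝ s →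
      (1 - r) • p + r • q ∈ affineSpan ℝ s := by
    intro p q r hp hq
    have := AffineMap.lineMap_mem r hp hq
    rwa [AffineMap.lineMap_apply_module] at this
  refine mem_intrinsicInterior.2 ⟨⟨_, hcombo x y' t hxs y'.2⟩, ?_, rfl⟩
  rw [mem_interior_iff_mem_nhds, Metric.mem_nhds_iff]
  refine ⟨t * ε, by positivity, ?_⟩
  rintro ⟨p, hp⟩ hpb
  rw [Metric.mem_ball, Subtype.dist_eq, dist_eq_norm] at hpb
  simp only [mem_preimage] at hpb ⊢
  -- `p` is the same combination of `x` and a point `q` of the affine span near `y`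
  set q : E := (1 - t⁻¹) • x + t⁻¹ • p with hq
  have hqs : q ∈ affineSpan ℝ s := hcombo x p t⁻¹ hxs hp
  have hpq : p = (1 - t) • x + t • q := by
    rw [hq]
    match_scalars <;> field_simp
    ring
  have hqd : q - y' = t⁻¹ • (p - ((1 - t) • x + t • (y' : E))) := by
    rw [hq]
    match_scalars <;> field_simp
    ring
  have hqy : (⟨q, hqs⟩ : affineSpan ℝ s) ∈ Metric.ball y' ε := by
    rw [Metric.mem_ball, Subtype.dist_eq, dist_eq_norm]
    simp only
    rw [hqd, norm_smul, norm_inv, Real.norm_of_nonneg ht.le, inv_mul_lt_iff₀ ht]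
    exact hpb
  rw [hpq]
  exact hs hx (hball hqy) (by linarith) ht.le (by ring)

end Convexity

/-! ### The Laplace transform and the domain of the rate function -/

section Laplace

variable {d : ℕ}

/-- The Laplace transform `E[exp(u·X)]`, with values in `[0, +∞]`; its logarithm is `logLaplace`. -/
def laplace (μ : Measure (EuclideanSpace ℝ (Fin d))) (u : EuclideanSpace ℝ (Fin d)) : ℝ≥0∞ :=
  ∫⁻ x, ENNReal.ofReal (Real.exp ⟪u, x⟫) ∂μ

theorem measurable_expInner (u : EuclideanSpace ℝ (Fin d)) :
    Measurable fun x : EuclideanSpace ℝ (Fin d) => ENNReal.ofReal (Real.exp ⟪u, x⟫) := by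
  have : Continuous fun x : EuclideanSpace ℝ (Fin d) => Real.exp ⟪u, x⟫ := by fun_prop
  exact this.measurable.ennreal_ofReal

theorem laplace_zero (μ : Measure (EuclideanSpace ℝ (Fin d))) [IsProbabilityMeasure μ] :
    laplace μ 0 = 1 := by simp [laplace]

theorem laplace_ne_zero (μ : Measure (EuclideanSpace ℝ (Fin d))) [IsProbabilityMeasure μ]
    (u : EuclideanSpace ℝ (Fin d)) : laplace μ u ≠ 0 := by
  intro h
  rw [laplace, lintegral_eq_zero_iff (measurable_expInner u)] at h
  obtain ⟨x, hx⟩ := h.exists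
  exact (ENNReal.ofReal_pos.2 (Real.exp_pos _)).ne' hx

theorem mem_edom_logLaplace {μ : Measure (EuclideanSpace ℝ (Fin d))}
    {u : EuclideanSpace ℝ (Fin d)} : u ∈ edom (logLaplace μ) ↔ laplace μ u ≠ ⊤ := by
  change ENNReal.log (laplace μ u) < ⊤ ↔ _
  rw [ENNReal.log_lt_top_iff, lt_top_iff_ne_top]

/-- Multiplicative description of `D(I_X)`: no case distinction on infinite values of `K_X` is
needed, since `M * ⊤ = ⊤` for the nonzero constant `M`. -/
theorem mem_edom_rateFn {μ : Measure (EuclideanSpace ℝ (Fin d))} [IsProbabilityMeasure μ]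
    {v : EuclideanSpace ℝ (Fin d)} : v ∈ edom (rateFn μ) ↔
      ∃ M : ℝ≥0∞, M ≠ ⊤ ∧ ∀ u, ENNReal.ofReal (Real.exp ⟪u, v⟫) ≤ M * laplace μ u := by
  have hcoe : ∀ r : ℝ, ((r : ℝ) : EReal) = ENNReal.log (ENNReal.ofReal (Real.exp r)) := fun r => by
    rw [ENNReal.log_ofReal_of_pos (Real.exp_pos r), Real.log_exp]
  have hiff : ∀ (M : ℝ≥0∞) (u : EuclideanSpace ℝ (Fin d)), M ≠ ⊤ → M ≠ 0 →
      (((⟪u, v⟫ : ℝ) : EReal) - logLaplace μ u ≤ ENNReal.log M ↔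
        ENNReal.ofReal (Real.exp ⟪u, v⟫) ≤ M * laplace μ u) := by
    intro M u hM hM0
    rw [EReal.sub_le_iff_le_add (Or.inr (by simpa using hM)) (Or.inr (by simpa using hM0)), hcoe]
    change _ ≤ ENNReal.log M + ENNReal.log (laplace μ u) ↔ _
    rw [← ENNReal.log_mul_add, ENNReal.log_le_log_iff]
  constructor
  · intro hv
    have hv : rateFn μ v < ⊤ := hv
    have h0 : 0 ≤ rateFn μ v := by
      refine le_trans ?_ (le_iSup _ (0 : EuclideanSpace ℝ (Fin d)))
      change (0 : EReal) ≤ _ - ENNReal.log (laplace μ 0)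
      simp [laplace_zero]
    obtain ⟨M, hM⟩ := ENNReal.log_surjective (rateFn μ v)
    have hMt : M ≠ ⊤ := by
      rintro rfl
      simp [← hM] at hv
    have hM0 : M ≠ 0 := by
      rintro rfl
      simp [← hM] at h0
    refine ⟨M, hMt, fun u => (hiff M u hMt hM0).1 ?_⟩
    rw [hM]
    exact le_iSup (fun u => ((⟪u, v⟫ : ℝ) : EReal) - logLaplace μ u) u
  · rintro ⟨M, hMt, hM⟩
    have hM0 : M ≠ 0 := by
      rintro rfl
      simpa using hM 0
    refine lt_of_le_of_lt (iSup_le fun u => (hiff M u hMt hM0).2 (hM u)) ?_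
    rwa [ENNReal.log_lt_top_iff, lt_top_iff_ne_top]

/-- Convexity of `exp` along a segment, in the form used for both arguments of the inner product. -/
theorem ofReal_exp_combo_le {a b p q : ℝ} (ha : 0 ≤ a) (hb : 0 ≤ b) (hab : a + b = 1) :
    ENNReal.ofReal (Real.exp (a * p + b * q)) ≤
      ENNReal.ofReal a * ENNReal.ofReal (Real.exp p) +
        ENNReal.ofReal b * ENNReal.ofReal (Real.exp q) := by
  rw [← ENNReal.ofReal_mul ha, ← ENNReal.ofReal_mul hb,
    ← ENNReal.ofReal_add (by positivity) (by positivity)]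
  exact ENNReal.ofReal_le_ofReal (convexOn_exp.2 (mem_univ p) (mem_univ q) ha hb hab)

theorem laplace_combo_le (μ : Measure (EuclideanSpace ℝ (Fin d)))
    (u w : EuclideanSpace ℝ (Fin d)) {a b : ℝ} (ha : 0 ≤ a) (hb : 0 ≤ b) (hab : a + b = 1) :
    laplace μ (a • u + b • w) ≤
      ENNReal.ofReal a * laplace μ u + ENNReal.ofReal b * laplace μ w := by
  rw [laplace, laplace, laplace, ← lintegral_const_mul _ (measurable_expInner u),
    ← lintegral_const_mul _ (measurable_expInner w),
    ← lintegral_add_left ((measurable_expInner u).const_mul _)]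
  refine lintegral_mono fun x => ?_
  rw [inner_add_left, real_inner_smul_left, real_inner_smul_left]
  exact ofReal_exp_combo_le ha hb hab

theorem convex_edom_logLaplace (μ : Measure (EuclideanSpace ℝ (Fin d))) :
    Convex ℝ (edom (logLaplace μ)) := by
  intro u hu w hw a b ha hb hab
  rw [mem_edom_logLaplace] at *
  refine ne_top_of_le_ne_top ?_ (laplace_combo_le μ u w ha hb hab)
  finiteness

theorem convex_edom_rateFn (μ : Measure (EuclideanSpace ℝ (Fin d))) [IsProbabilityMeasure μ] :
    Convex ℝ (edom (rateFn μ)) := by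
  intro v hv w hw a b ha hb hab
  rw [mem_edom_rateFn] at *
  obtain ⟨M, hMt, hM⟩ := hv
  obtain ⟨N, hNt, hN⟩ := hw
  refine ⟨ENNReal.ofReal a * M + ENNReal.ofReal b * N, by finiteness, fun u => ?_⟩
  rw [inner_add_right, real_inner_smul_right, real_inner_smul_right, add_mul, mul_assoc, mul_assoc]
  refine (ofReal_exp_combo_le ha hb hab).trans ?_
  gcongr
  · exact hM u
  · exact hN u

/-- A lower bound `K_X ≥ K_Y + const` gives `I_X ≤ I_Y - const`, hence `D(I_Y) ⊆ D(I_X)`. -/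
theorem edom_rateFn_subset {μ ν : Measure (EuclideanSpace ℝ (Fin d))} [IsProbabilityMeasure μ]
    [IsProbabilityMeasure ν] {a : ℝ≥0∞} (ha : a ≠ 0) (hat : a ≠ ⊤)
    (h : ∀ u, a * laplace ν u ≤ laplace μ u) : edom (rateFn ν) ⊆ edom (rateFn μ) := by
  intro v hv
  rw [mem_edom_rateFn] at *
  obtain ⟨M, hMt, hM⟩ := hv
  refine ⟨M * a⁻¹, by finiteness, fun u => (hM u).trans ?_⟩
  calc M * laplace ν u = M * a⁻¹ * (a * laplace ν u) := by
        rw [mul_assoc, ← mul_assoc a⁻¹, ENNReal.inv_mul_cancel ha hat, one_mul]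
    _ ≤ _ := by gcongr; exact h u

theorem measure_mul_laplace_cond (μ : Measure (EuclideanSpace ℝ (Fin d))) [IsProbabilityMeasure μ]
    {C : Set (EuclideanSpace ℝ (Fin d))} (hC : μ C ≠ 0) (u : EuclideanSpace ℝ (Fin d)) :
    μ C * laplace (μ[|C]) u = ∫⁻ x in C, ENNReal.ofReal (Real.exp ⟪u, x⟫) ∂μ := by
  rw [laplace, ProbabilityTheory.cond, lintegral_smul_measure, smul_eq_mul, ← mul_assoc,
    ENNReal.mul_inv_cancel hC (measure_ne_top μ C), one_mul]

theorem edom_rateFn_cond_mono (μ : Measure (EuclideanSpace ℝ (Fin d))) [IsProbabilityMeasure μ]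
    {B C : Set (EuclideanSpace ℝ (Fin d))} (hB : μ B ≠ 0) (hBC : B ⊆ C) :
    edom (rateFn (μ[|B])) ⊆ edom (rateFn (μ[|C])) := by
  have hC : μ C ≠ 0 := fun h => hB (measure_mono_null hBC h)
  have := cond_isProbabilityMeasure hB
  have := cond_isProbabilityMeasure hC
  refine edom_rateFn_subset (a := (μ C)⁻¹ * μ B) ?_ ?_ fun u => ?_
  · exact mul_ne_zero (ENNReal.inv_ne_zero.2 (measure_ne_top μ C)) hB
  · exact ENNReal.mul_ne_top (ENNReal.inv_ne_top.2 hC) (measure_ne_top μ B)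
  · rw [mul_assoc, measure_mul_laplace_cond μ hB]
    calc _ ≤ (μ C)⁻¹ * ∫⁻ x in C, ENNReal.ofReal (Real.exp ⟪u, x⟫) ∂μ := by
          gcongr
      _ = _ := by
          rw [← measure_mul_laplace_cond μ hC, ← mul_assoc,
            ENNReal.inv_mul_cancel hC (measure_ne_top μ C), one_mul]

theorem edom_rateFn_cond_subset (μ : Measure (EuclideanSpace ℝ (Fin d))) [IsProbabilityMeasure μ]
    {B : Set (EuclideanSpace ℝ (Fin d))} (hB : μ B ≠ 0) :
    edom (rateFn (μ[|B])) ⊆ edom (rateFn μ) := by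
  have := edom_rateFn_cond_mono μ hB (subset_univ B)
  rwa [cond_univ] at this

theorem inner_le_of_mem_edom_rateFn {μ : Measure (EuclideanSpace ℝ (Fin d))}
    [IsProbabilityMeasure μ] {ℓ : EuclideanSpace ℝ (Fin d)} {c : ℝ}
    (hle : ∀ᵐ x ∂μ, ⟪ℓ, x⟫ ≤ c) {v : EuclideanSpace ℝ (Fin d)} (hv : v ∈ edom (rateFn μ)) :
    ⟪ℓ, v⟫ ≤ c := by
  obtain ⟨M, hMt, hM⟩ := mem_edom_rateFn.1 hv
  by_contra! hlt
  -- testing with `n • ℓ` gives `exp (n (ℓ·v - c)) ≤ M` for every `n`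
  have hbound : ∀ n : ℕ, Real.exp (n * (⟪ℓ, v⟫ - c)) ≤ M.toReal := by
    intro n
    have h1 := hM ((n : ℝ) • ℓ)
    have h2 : laplace μ ((n : ℝ) • ℓ) ≤ ENNReal.ofReal (Real.exp (n * c)) := by
      calc _ ≤ ∫⁻ _, ENNReal.ofReal (Real.exp (n * c)) ∂μ := by
            refine lintegral_mono_ae (hle.mono fun x hx => ?_)
            rw [real_inner_smul_left]
            gcongr
        _ = _ := by simp
    have h3 := h1.trans (mul_le_mul_right h2 M)
    rw [← ENNReal.ofReal_toReal hMt, ← ENNReal.ofReal_mul ENNReal.toReal_nonneg,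
      ENNReal.ofReal_le_ofReal_iff (by positivity), real_inner_smul_left] at h3
    rw [mul_sub, Real.exp_sub, div_le_iff₀ (Real.exp_pos _)]
    exact h3
  obtain ⟨n, hn⟩ := exists_nat_gt (M.toReal / (⟪ℓ, v⟫ - c))
  rw [div_lt_iff₀ (by linarith)] at hn
  have := hbound n
  have := Real.add_one_le_exp (n * (⟪ℓ, v⟫ - c))
  linarith

theorem measurableSet_hyp (ℓ : EuclideanSpace ℝ (Fin d)) (c : ℝ) : MeasurableSet (hyp ℓ c) :=
  (isClosed_eq (by fun_prop) continuous_const : IsClosed {v | ⟪ℓ, v⟫ = c}).measurableSet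

theorem mem_hyp_of_mem_edom_rateFn {μ : Measure (EuclideanSpace ℝ (Fin d))}
    [IsProbabilityMeasure μ] {ℓ : EuclideanSpace ℝ (Fin d)} {c : ℝ}
    (hL : ∀ᵐ x ∂μ, x ∈ hyp ℓ c) : edom (rateFn μ) ⊆ hyp ℓ c := by
  intro v hv
  have hL' : ∀ᵐ x ∂μ, ⟪ℓ, x⟫ = c := hL
  have h1 : ⟪ℓ, v⟫ ≤ c := inner_le_of_mem_edom_rateFn (hL'.mono fun x hx => hx.le) hv
  have h2 : ⟪-ℓ, v⟫ ≤ -c :=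
    inner_le_of_mem_edom_rateFn (hL'.mono fun x hx => by rw [inner_neg_left, hx]) hv
  rw [inner_neg_left] at h2
  exact le_antisymm h1 (by linarith)

/-- If `ℓ·X ≤ c` almost surely, a bound `exp(u·v) ≤ M E[exp(u·X)]` valid for all `u`, with `v` on
the hyperplane `L = {ℓ·x = c}`, improves to `exp(u·v) ≤ M E[exp(u·X); X ∈ L]`: apply it to
`u + nℓ`, divide by `exp(nc)`, and let `n → ∞` by dominated convergence. -/
theorem exp_le_setLIntegral_hyp {μ : Measure (EuclideanSpace ℝ (Fin d))}
    {ℓ : EuclideanSpace ℝ (Fin d)} {c : ℝ} (hle : ∀ᵐ x ∂μ, ⟪ℓ, x⟫ ≤ c)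
    {v : EuclideanSpace ℝ (Fin d)} (hv : v ∈ hyp ℓ c) {M : ℝ≥0∞} (hMt : M ≠ ⊤)
    (hM : ∀ u, ENNReal.ofReal (Real.exp ⟪u, v⟫) ≤ M * laplace μ u)
    {u : EuclideanSpace ℝ (Fin d)} (hu : laplace μ u ≠ ⊤) :
    ENNReal.ofReal (Real.exp ⟪u, v⟫) ≤
      M * ∫⁻ x in hyp ℓ c, ENNReal.ofReal (Real.exp ⟪u, x⟫) ∂μ := by
  have hv : ⟪ℓ, v⟫ = c := hv
  set G : ℕ → EuclideanSpace ℝ (Fin d) → ℝ≥0∞ :=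
    fun n x => ENNReal.ofReal (Real.exp (⟪u, x⟫ + n * (⟪ℓ, x⟫ - c))) with hG
  have hGm : ∀ n, Measurable (G n) := fun n => by
    have : Continuous fun x : EuclideanSpace ℝ (Fin d) =>
      Real.exp (⟪u, x⟫ + n * (⟪ℓ, x⟫ - c)) := by fun_prop
    exact this.measurable.ennreal_ofReal
  have hstep : ∀ n, ENNReal.ofReal (Real.exp ⟪u, v⟫) ≤ M * ∫⁻ x, G n x ∂μ := by
    intro n
    have h1 := hM (u + (n : ℝ) • ℓ)
    rw [inner_add_left, real_inner_smul_left, hv] at h1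
    have h2 : ∫⁻ x, G n x ∂μ =
        ENNReal.ofReal (Real.exp (-(n * c))) * laplace μ (u + (n : ℝ) • ℓ) := by
      rw [laplace, ← lintegral_const_mul _ (measurable_expInner _)]
      refine lintegral_congr fun x => ?_
      rw [← ENNReal.ofReal_mul (Real.exp_nonneg _), ← Real.exp_add, inner_add_left,
        real_inner_smul_left]
      simp only [hG]
      congr 2
      ring
    rw [h2, mul_left_comm]
    calc _ = ENNReal.ofReal (Real.exp (-(n * c))) *
          ENNReal.ofReal (Real.exp (⟪u, v⟫ + n * c)) := by
          rw [← ENNReal.ofReal_mul (Real.exp_nonneg _), ← Real.exp_add]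
          congr 2
          ring
      _ ≤ _ := by gcongr
  have hlim : Tendsto (fun n => ∫⁻ x, G n x ∂μ) atTop
      (𝓝 (∫⁻ x, (hyp ℓ c).indicator (fun x => ENNReal.ofReal (Real.exp ⟪u, x⟫)) x ∂μ)) := by
    refine tendsto_lintegral_of_dominated_convergence _ hGm ?_ hu ?_
    · intro n
      filter_upwards [hle] with x hx
      have : (n : ℝ) * (⟪ℓ, x⟫ - c) ≤ 0 := mul_nonpos_of_nonneg_of_nonpos (by positivity)
        (by linarith)
      simp only [hG]
      gcongr
      linarith
    · filter_upwards [hle] with x hx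
      by_cases hxL : x ∈ hyp ℓ c
      · have hx' : ⟪ℓ, x⟫ = c := hxL
        simp [hG, hx', hxL]
      · have hx' : ⟪ℓ, x⟫ - c < 0 := by
          have : ⟪ℓ, x⟫ ≠ c := hxL
          have := lt_of_le_of_ne hx this
          linarith
        rw [indicator_of_notMem hxL, ← ENNReal.ofReal_zero]
        refine ENNReal.tendsto_ofReal (Real.tendsto_exp_atBot.comp ?_)
        exact tendsto_atBot_add_const_left _ _
          (tendsto_natCast_atTop_atTop.atTop_mul_const_of_neg hx')
  rw [lintegral_indicator (measurableSet_hyp ℓ c)] at hlim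
  exact ge_of_tendsto' (ENNReal.Tendsto.const_mul hlim (Or.inr hMt)) hstep

end Laplace

/-! ### The convex support -/

section Support

variable {d : ℕ}

theorem ae_mem_msupp (μ : Measure (EuclideanSpace ℝ (Fin d))) : ∀ᵐ x ∂μ, x ∈ msupp μ := by
  refine measure_null_of_locally_null _ fun x hx => ?_
  have hx : ¬ ∀ U : Set (EuclideanSpace ℝ (Fin d)), IsOpen U → x ∈ U → 0 < μ U := hx
  push Not at hx
  obtain ⟨U, hU, hxU, h0⟩ := hx
  exact ⟨U, mem_nhdsWithin_of_mem_nhds (hU.mem_nhds hxU), le_antisymm h0 zero_le⟩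

theorem ae_mem_convSupp (μ : Measure (EuclideanSpace ℝ (Fin d))) : ∀ᵐ x ∂μ, x ∈ convSupp μ :=
  (ae_mem_msupp μ).mono fun _ hx => subset_convexHull ℝ _ hx

theorem msupp_subset_of_ae {μ : Measure (EuclideanSpace ℝ (Fin d))}
    {S : Set (EuclideanSpace ℝ (Fin d))} (hS : IsClosed S) (h : ∀ᵐ x ∂μ, x ∈ S) :
    msupp μ ⊆ S := by
  intro x hx
  by_contra hxS
  have h0 : μ Sᶜ = 0 := h
  exact (hx Sᶜ hS.isOpen_compl hxS).ne h0.symm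

/-- Every ball of positive mass has its barycentre in the domain of the rate function, by Jensen's
inequality. -/
theorem msupp_subset_closure_edom_rateFn (μ : Measure (EuclideanSpace ℝ (Fin d)))
    [IsProbabilityMeasure μ] : msupp μ ⊆ closure (edom (rateFn μ)) := by
  intro x hx
  rw [Metric.mem_closure_iff]
  intro ε hε
  set B := Metric.ball x (ε / 2) with hB
  have hBpos : μ B ≠ 0 := (hx B Metric.isOpen_ball (Metric.mem_ball_self (by positivity))).ne'
  have hprob := cond_isProbabilityMeasure hBpos
  have hmem : ∀ᵐ y ∂μ[|B], y ∈ Metric.closedBall x (ε / 2) := by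
    have : ∀ᵐ y ∂μ[|B], y ∈ B := ae_cond_mem Metric.isOpen_ball.measurableSet
    exact this.mono fun y hy => Metric.ball_subset_closedBall hy
  have hint : Integrable (fun y => y) (μ[|B]) := by
    refine Integrable.of_bound (by fun_prop) (‖x‖ + ε / 2) (hmem.mono fun y hy => ?_)
    rw [mem_closedBall_iff_norm] at hy
    have := norm_le_norm_add_norm_sub x y
    rw [norm_sub_rev] at this
    linarith
  set m := ∫ y, y ∂μ[|B] with hm
  have hmB : m ∈ Metric.closedBall x (ε / 2) :=
    (convex_closedBall x (ε / 2)).integral_mem Metric.isClosed_closedBall hmem hint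
  refine ⟨m, edom_rateFn_cond_subset μ hBpos ?_, ?_⟩
  · refine mem_edom_rateFn.2 ⟨1, by simp, fun u => ?_⟩
    rw [one_mul]
    by_cases hu : laplace (μ[|B]) u = ⊤
    · simp [hu]
    have hinner : Integrable (fun y => ⟪u, y⟫) (μ[|B]) := hint.const_inner u
    have hexp : Integrable (fun y => Real.exp ⟪u, y⟫) (μ[|B]) := by
      refine ⟨by fun_prop, ?_⟩
      rw [hasFiniteIntegral_iff_ofReal (ae_of_all _ fun y => (Real.exp_nonneg _))]
      exact lt_top_iff_ne_top.2 hu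
    have hj := convexOn_exp.map_integral_le Real.continuous_exp.continuousOn isClosed_univ
      (ae_of_all _ fun y => mem_univ _) hinner hexp
    rw [integral_inner hint] at hj
    rw [laplace, ← ofReal_integral_eq_lintegral_ofReal hexp
      (ae_of_all _ fun y => (Real.exp_nonneg _))]
    exact ENNReal.ofReal_le_ofReal hj
  · rw [Metric.mem_closedBall, dist_comm] at hmB
    linarith

theorem convSupp_subset_closure_edom_rateFn (μ : Measure (EuclideanSpace ℝ (Fin d)))
    [IsProbabilityMeasure μ] : convSupp μ ⊆ closure (edom (rateFn μ)) :=
  convexHull_min (msupp_subset_closure_edom_rateFn μ) (convex_edom_rateFn μ).closure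

theorem edom_rateFn_nonempty (μ : Measure (EuclideanSpace ℝ (Fin d)))
    [IsProbabilityMeasure μ] : (edom (rateFn μ)).Nonempty := by
  obtain ⟨x, hx⟩ := (ae_mem_msupp μ).exists
  exact closure_nonempty_iff.1 ⟨x, msupp_subset_closure_edom_rateFn μ hx⟩

/-- `C_X ∩ L` need not be measurable a priori, but it agrees with `L` up to a null set. -/
theorem cond_convSupp_inter (μ : Measure (EuclideanSpace ℝ (Fin d)))
    (L : Set (EuclideanSpace ℝ (Fin d))) :
    μ (convSupp μ ∩ L) = μ L ∧ μ[|convSupp μ ∩ L] = μ[|L] := by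
  have h : (convSupp μ ∩ L : Set _) =ᵐ[μ] L := by
    filter_upwards [ae_mem_convSupp μ] with x hx
    exact propext ⟨fun h => h.2, fun h => ⟨hx, h⟩⟩
  refine ⟨measure_congr h, ?_⟩
  rw [ProbabilityTheory.cond, ProbabilityTheory.cond, measure_congr h, Measure.restrict_congr_set h]

/-- A maximal proper face of `C_X` is cut out by a supporting hyperplane, so conditioning on the
face is conditioning on that hyperplane. -/
theorem exists_hyp_of_mem_facesPlus {μ : Measure (EuclideanSpace ℝ (Fin d))}
    {C : Set (EuclideanSpace ℝ (Fin d))} (hC : C ∈ facesPlus μ) :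
    ∃ (ℓ : EuclideanSpace ℝ (Fin d)) (c : ℝ), ‖ℓ‖ = 1 ∧ (∀ x ∈ convSupp μ, ⟪ℓ, x⟫ ≤ c) ∧
      (∃ a ∈ convSupp μ, ⟪ℓ, a⟫ < c) ∧ μ (hyp ℓ c) ≠ 0 ∧ μ[|C] = μ[|hyp ℓ c] := by
  obtain ⟨⟨hface, hne, hCne, hmax⟩, hpos⟩ := hC
  have hconv : Convex ℝ (convSupp μ) := convex_convexHull ℝ _
  obtain ⟨ℓ, c, hℓ, hle, heq, a, haA, hac⟩ := exists_support_of_face hconv hface hne hCne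
  have hsub : C ⊆ convSupp μ ∩ hyp ℓ c := subset_inter hface.2.subset heq
  have hCeq : convSupp μ ∩ hyp ℓ c = C := by
    refine (hmax _ (isFaceOf_inter_support hconv hle) (hne.mono hsub) hsub).resolve_left ?_
    intro h
    exact hac.ne (h.symm.subset haA).2
  obtain ⟨h1, h2⟩ := cond_convSupp_inter μ (hyp ℓ c)
  rw [hCeq] at h1 h2
  exact ⟨ℓ, c, hℓ, hle, ⟨a, haA, hac⟩, h1 ▸ hpos.ne', h2⟩

end Support

/-! ### Slices of the domain by supporting hyperplanes -/

section Slices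

variable {d : ℕ} {μ : Measure (EuclideanSpace ℝ (Fin d))} [IsProbabilityMeasure μ]
  {ℓ : EuclideanSpace ℝ (Fin d)} {c : ℝ}

theorem eq_add_smul_of_projHyp_eq {u w : EuclideanSpace ℝ (Fin d)}
    (h : projHyp ℓ c u = projHyp ℓ c w) : ∃ s : ℝ, w = u + s • ℓ := by
  refine ⟨⟪ℓ, w⟫ - ⟪ℓ, u⟫, ?_⟩
  have h' : w = u + (c - ⟪ℓ, u⟫) • ℓ - (c - ⟪ℓ, w⟫) • ℓ := by
    rw [eq_sub_iff_add_eq]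
    exact h.symm
  refine h'.trans ?_
  module

theorem measure_hyp_lt_one (hlt : ∃ a ∈ convSupp μ, ⟪ℓ, a⟫ < c) : μ (hyp ℓ c) < 1 := by
  refine lt_of_le_of_ne prob_le_one fun h => ?_
  have hae : ∀ᵐ x ∂μ, x ∈ hyp ℓ c := (mem_ae_iff_prob_eq_one (measurableSet_hyp ℓ c)).2 h
  have hsub : convSupp μ ⊆ {x | c ≤ ⟪ℓ, x⟫} := by
    refine convexHull_min ?_ (convex_halfSpace_ge (innerSL ℝ ℓ).toLinearMap.isLinear c)
    refine msupp_subset_of_ae (isClosed_le continuous_const (by fun_prop)) (hae.mono ?_)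
    intro x hx
    exact (show ⟪ℓ, x⟫ = c from hx).ge
  obtain ⟨a, ha, hac⟩ := hlt
  exact absurd (hsub ha) (not_le.2 hac)

/-- For a supporting hyperplane `L` of positive mass not containing `C_X`, condition (a) gives
`D(I_{X|L}) = D(I_X) ∩ L`. For `v ∈ D(I_X) ∩ L`, `exp_le_setLIntegral_hyp` bounds
`exp(u·v)` by a multiple of `E[exp(u·X) | L]` for `u ∈ D(K_X)`; condition (a) transfers the bound
to the relative interior of `D(K_{X|L})`, and convexity to the rest of `D(K_{X|L})`. -/
theorem edom_rateFn_cond_hyp (ha : CondA μ) (hℓ : ‖ℓ‖ = 1)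
    (hle : ∀ x ∈ convSupp μ, ⟪ℓ, x⟫ ≤ c) (hlt : ∃ a ∈ convSupp μ, ⟪ℓ, a⟫ < c)
    (hpos : μ (hyp ℓ c) ≠ 0) :
    edom (rateFn (μ[|hyp ℓ c])) = edom (rateFn μ) ∩ hyp ℓ c := by
  have hprob := cond_isProbabilityMeasure hpos
  have hcond_mem : ∀ᵐ x ∂μ[|hyp ℓ c], x ∈ hyp ℓ c := ae_cond_mem (measurableSet_hyp ℓ c)
  refine Subset.antisymm (subset_inter (edom_rateFn_cond_subset μ hpos)
    (mem_hyp_of_mem_edom_rateFn hcond_mem)) ?_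
  rintro v ⟨hv, hvL⟩
  obtain ⟨M, hMt, hM⟩ := mem_edom_rateFn.1 hv
  have hle' : ∀ᵐ x ∂μ, ⟪ℓ, x⟫ ≤ c := (ae_mem_convSupp μ).mono hle
  have hsupp : SupportsSet ℓ c (convSupp μ) := by
    refine ⟨?_, Or.inl hle⟩
    rw [inter_comm]
    refine nonempty_of_measure_ne_zero (μ := μ) ?_
    rwa [(cond_convSupp_inter μ _).1]
  have hproj := ha ℓ c hℓ hsupp (pos_iff_ne_zero.2 hpos) (measure_hyp_lt_one hlt)
  set ν := μ[|hyp ℓ c] with hν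
  set N := M * μ (hyp ℓ c) with hN
  have hNt : N ≠ ⊤ := ENNReal.mul_ne_top hMt (measure_ne_top _ _)
  -- the bound at points of the relative interior of `D(K_{X|L})`
  have hrint : ∀ w ∈ intrinsicInterior ℝ (edom (logLaplace ν)),
      ENNReal.ofReal (Real.exp ⟪w, v⟫) ≤ N * laplace ν w := by
    intro w hw
    obtain ⟨u, hu, huw⟩ := hproj.symm.subset (mem_image_of_mem (projHyp ℓ c) hw)
    obtain ⟨s, rfl⟩ := eq_add_smul_of_projHyp_eq huw
    have h1 := exp_le_setLIntegral_hyp hle' hvL hMt hM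
      (mem_edom_logLaplace.1 (intrinsicInterior_subset hu))
    rw [← measure_mul_laplace_cond μ hpos, ← mul_assoc, ← hN, ← hν] at h1
    -- `ℓ·X = c` almost surely under `ν`, so moving along `ℓ` rescales both sides equally
    have h2 : laplace ν (u + s • ℓ) = ENNReal.ofReal (Real.exp (s * c)) * laplace ν u := by
      rw [laplace, laplace, ← lintegral_const_mul _ (measurable_expInner _)]
      refine lintegral_congr_ae (hcond_mem.mono fun x hx => ?_)
      have hx : ⟪ℓ, x⟫ = c := hx
      simp only
      rw [← ENNReal.ofReal_mul (Real.exp_nonneg _), ← Real.exp_add, inner_add_left,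
        real_inner_smul_left, hx, add_comm]
    have hv' : ⟪ℓ, v⟫ = c := hvL
    rw [h2, inner_add_left, real_inner_smul_left, hv', add_comm, Real.exp_add,
      ENNReal.ofReal_mul (Real.exp_nonneg _), mul_left_comm]
    gcongr
  refine mem_edom_rateFn.2 ⟨N, hNt, fun w => ?_⟩
  by_cases hw : laplace ν w = ⊤
  · have hN0 : N ≠ 0 := by
      refine mul_ne_zero ?_ hpos
      rintro rfl
      simpa using hM 0
    rw [hw, ENNReal.mul_top hN0]
    exact le_top
  have hconv := convex_edom_logLaplace ν
  have hwD : w ∈ edom (logLaplace ν) := mem_edom_logLaplace.2 hw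
  obtain ⟨w₀, hw₀⟩ := Set.Nonempty.intrinsicInterior hconv ⟨w, hwD⟩
  have hw₀D : laplace ν w₀ ≠ ⊤ := mem_edom_logLaplace.1 (intrinsicInterior_subset hw₀)
  -- approach `w` along the segment from `w₀`
  have hineq : ∀ᶠ t in 𝓝[>] (0 : ℝ), ENNReal.ofReal (Real.exp ⟪(1 - t) • w + t • w₀, v⟫) ≤
      N * (ENNReal.ofReal (1 - t) * laplace ν w + ENNReal.ofReal t * laplace ν w₀) := by
    filter_upwards [Ioc_mem_nhdsGT (zero_lt_one (α := ℝ))] with t ht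
    refine (hrint _ (combo_mem_intrinsicInterior hconv hwD hw₀ ht.1 ht.2)).trans ?_
    gcongr
    exact laplace_combo_le ν w w₀ (by linarith [ht.2]) ht.1.le (by ring)
  have hlim1 : Tendsto (fun t : ℝ => ENNReal.ofReal (Real.exp ⟪(1 - t) • w + t • w₀, v⟫))
      (𝓝[>] 0) (𝓝 (ENNReal.ofReal (Real.exp ⟪w, v⟫))) := by
    have hc : Continuous fun t : ℝ =>
        ENNReal.ofReal (Real.exp ⟪(1 - t) • w + t • w₀, v⟫) :=
      ENNReal.continuous_ofReal.comp (by fun_prop)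
    have := hc.tendsto 0
    simp only [sub_zero, one_smul, zero_smul, add_zero] at this
    exact this.mono_left nhdsWithin_le_nhds
  have hlim2 : Tendsto (fun t : ℝ =>
      N * (ENNReal.ofReal (1 - t) * laplace ν w + ENNReal.ofReal t * laplace ν w₀))
      (𝓝[>] 0) (𝓝 (N * laplace ν w)) := by
    have h1 : Tendsto (fun t : ℝ => ENNReal.ofReal (1 - t)) (𝓝 0) (𝓝 1) := by
      have : Continuous fun t : ℝ => ENNReal.ofReal (1 - t) :=
        ENNReal.continuous_ofReal.comp (by fun_prop)
      simpa using this.tendsto 0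
    have h2 : Tendsto (fun t : ℝ => ENNReal.ofReal t) (𝓝 0) (𝓝 0) := by
      simpa using ENNReal.continuous_ofReal.tendsto 0
    have h3 := ENNReal.Tendsto.const_mul ((ENNReal.Tendsto.mul_const h1 (Or.inr hw)).add
      (ENNReal.Tendsto.mul_const h2 (Or.inr hw₀D))) (Or.inr hNt)
    simp only [one_mul, zero_mul, add_zero] at h3
    exact h3.mono_left nhdsWithin_le_nhds
  exact le_of_tendsto_of_tendsto hlim1 hlim2 hineq

theorem not_edom_rateFn_subset_hyp (hlt : ∃ a ∈ convSupp μ, ⟪ℓ, a⟫ < c) :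
    ¬ edom (rateFn μ) ⊆ hyp ℓ c := by
  intro h
  obtain ⟨a, ha, hac⟩ := hlt
  have hcl : IsClosed (hyp ℓ c) := isClosed_eq (by fun_prop) continuous_const
  have : ⟪ℓ, a⟫ = c := closure_minimal h hcl (convSupp_subset_closure_edom_rateFn μ ha)
  exact hac.ne this

theorem face_of_mem_facesPlus (ha : CondA μ) {C : Set (EuclideanSpace ℝ (Fin d))}
    (hC : C ∈ facesPlus μ) :
    IsFaceOf (edom (rateFn μ)) (edom (rateFn (μ[|C]))) ∧
      (edom (rateFn (μ[|C]))).Nonempty ∧ edom (rateFn (μ[|C])) ≠ edom (rateFn μ) := by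
  obtain ⟨ℓ, c, hℓ, hle, hlt, hpos, hcond⟩ := exists_hyp_of_mem_facesPlus hC
  have hprob := cond_isProbabilityMeasure hpos
  rw [hcond]
  refine ⟨?_, edom_rateFn_nonempty _, ?_⟩
  · rw [edom_rateFn_cond_hyp ha hℓ hle hlt hpos]
    exact isFaceOf_inter_support (convex_edom_rateFn μ) fun x hx =>
      inner_le_of_mem_edom_rateFn ((ae_mem_convSupp μ).mono hle) hx
  · rw [edom_rateFn_cond_hyp ha hℓ hle hlt hpos]
    exact fun h => not_edom_rateFn_subset_hyp hlt (inter_eq_left.1 h)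

/-- A hyperplane `L` supporting `D(I_X)` along a maximal proper face `F` also supports `C_X` and has
positive mass; any maximal proper face `C` of `C_X` containing `C_X ∩ L` satisfies
`F ⊆ D(I_{X|L}) ⊆ D(I_{X|C})`, and maximality of `F` forces equality. -/
theorem exists_facesPlus_of_maxProperFace (ha : CondA μ) {F : Set (EuclideanSpace ℝ (Fin d))}
    (hF : IsMaxProperFace (edom (rateFn μ)) F) :
    ∃ C ∈ facesPlus μ, F = edom (rateFn (μ[|C])) := by
  obtain ⟨hface, hne, hFne, hmax⟩ := hF
  obtain ⟨ℓ, c, hℓ, hleD, heq, a, haD, hac⟩ :=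
    exists_support_of_face (convex_edom_rateFn μ) hface hne hFne
  have hle : ∀ x ∈ convSupp μ, ⟪ℓ, x⟫ ≤ c := fun x hx =>
    closure_minimal (t := {x | ⟪ℓ, x⟫ ≤ c}) hleD (isClosed_le (by fun_prop) continuous_const)
      (convSupp_subset_closure_edom_rateFn μ hx)
  have hlt : ∃ a ∈ convSupp μ, ⟪ℓ, a⟫ < c := by
    by_contra! hcon
    have hae : ∀ᵐ x ∂μ, x ∈ hyp ℓ c :=
      (ae_mem_convSupp μ).mono fun x hx => le_antisymm (hle x hx) (hcon x hx)
    exact hac.ne (mem_hyp_of_mem_edom_rateFn hae haD)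
  have hpos : μ (hyp ℓ c) ≠ 0 := by
    obtain ⟨v, hv⟩ := hne
    obtain ⟨M, hMt, hM⟩ := mem_edom_rateFn.1 (hface.2.subset hv)
    have h1 := exp_le_setLIntegral_hyp ((ae_mem_convSupp μ).mono hle) (heq v hv) hMt hM (u := 0)
      (by simp [laplace_zero])
    intro h0
    simp [h0] at h1
  have hconv : Convex ℝ (convSupp μ) := convex_convexHull ℝ _
  obtain ⟨h1, h2⟩ := cond_convSupp_inter μ (hyp ℓ c)
  have hB : μ (convSupp μ ∩ hyp ℓ c) ≠ 0 := by rwa [h1]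
  obtain ⟨C, hC, hsub⟩ := exists_maxProperFace (isFaceOf_inter_support hconv hle)
    (nonempty_of_measure_ne_zero hB) (by
      intro h
      obtain ⟨b, hb, hbc⟩ := hlt
      exact hbc.ne (h.symm.subset hb).2)
  have hCp : C ∈ facesPlus μ :=
    ⟨hC, (pos_iff_ne_zero.2 hB).trans_le (measure_mono hsub)⟩
  obtain ⟨hCf, hCne, hCproper⟩ := face_of_mem_facesPlus ha hCp
  refine ⟨C, hCp, ((hmax _ hCf hCne ?_).resolve_left hCproper).symm⟩
  calc F ⊆ edom (rateFn μ) ∩ hyp ℓ c := subset_inter hface.2.subset heq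
    _ = edom (rateFn (μ[|convSupp μ ∩ hyp ℓ c])) := by
      rw [h2, edom_rateFn_cond_hyp ha hℓ hle hlt hpos]
    _ ⊆ edom (rateFn (μ[|C])) := edom_rateFn_cond_mono μ hB hsub

end Slices

/-- **Theorem 2(1).** If condition (a) of the projection property holds, then
`F*(D(I_X)) ⊆ {D(I_{X|C}) : C ∈ F*₊(C_X)} ⊆ F(D(I_X)) \ {D(I_X)}`. -/
theorem maxProperFaces_edom_rateFn {d : ℕ} (hd : 1 ≤ d)
    (μ : Measure (EuclideanSpace ℝ (Fin d))) [IsProbabilityMeasure μ]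
    (ha : CondA μ) :
    (∀ F, IsMaxProperFace (edom (rateFn μ)) F →
        ∃ C ∈ facesPlus μ, F = edom (rateFn (μ[|C]))) ∧
    (∀ C ∈ facesPlus μ,
        IsFaceOf (edom (rateFn μ)) (edom (rateFn (μ[|C]))) ∧
        (edom (rateFn (μ[|C]))).Nonempty ∧
        edom (rateFn (μ[|C])) ≠ edom (rateFn μ)) := by
  exact ⟨fun F hF => exists_facesPlus_of_maxProperFace ha hF,
    fun C hC => face_of_mem_facesPlus ha hC⟩

end
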